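/- arXiv:2505.04951 — 2 statements merged into one kernel-verified Lean document; each statement's English description precedes it below -/
import Mathlib

section
/- For every integer n ≥ 4, the relative averaged prime gap satisfies ḡ_n / p̄_n < 2/n. -/
open Finset Real

/-- `nthPrime n` is the n-th prime number with 1-based indexing:
`nthPrime 1 = 2`, `nthPrime 2 = 3`, `nthPrime 3 = 5`, ... -/
noncomputable def nthPrime (n : ℕ) : ℕ := Nat.nth Nat.Prime (n - 1)

/-- The arithmetic average of the first `n` primes. -/
noncomputable def avgPrime (n : ℕ) : ℝ := (1 / (n : ℝ)) * ∑ i ∈ Finset.Icc 1 n, (nthPrime i : ℝ)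

/-- The gap in the averaged primes. -/
noncomputable def avgGap (n : ℕ) : ℝ := avgPrime (n + 1) - avgPrime n

/-- The averaged-prime counting function `π̄(x) = #{i ≥ 1 : p̄_i ≤ x}`. -/
noncomputable def avgPrimeCount (x : ℝ) : ℕ := Nat.card {i : ℕ | 1 ≤ i ∧ avgPrime i ≤ x}

/-- The ordinary prime counting function for a real argument. -/
noncomputable def primeCount (x : ℝ) : ℕ := Nat.card {q : ℕ | q.Prime ∧ (q : ℝ) ≤ x}

def force {α : Type} (n : ℕ) (f : ℕ → α) : α := Nat.casesOn n (f 0) (fun k => f (k + 1))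

theorem force_eq {α : Type} (n : ℕ) (f : ℕ → α) : force n f = f n := by
  cases n <;> rfl

/-- Check of the inequality at all primes in `[m, m + k)`, where `n`, `S` are the number and the
sum of the primes below `m`. -/
def pchk (Q : ℕ) : ℕ → ℕ → ℕ → ℕ → Bool
  | 0, _, _, _ => true
  | k + 1, m, n, S =>
    match Nat.beq (Nat.gcd m Q) 1 with
    | true =>
      match Nat.blt (n * n * m) ((3 * n + 2) * S) with
      | true => force (m + 1) fun m' => force (n + 1) fun n' => force (S + m) fun S' =>
          pchk Q k m' n' S'
      | false => false
    | false => force (m + 1) fun m' => pchk Q k m' n S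

def lchk : ℕ → ℕ → ℕ → ℕ → Bool
  | 0, _, _, _ => true
  | k + 1, m, l, t =>
    match Nat.ble (l.lcm (m + 1)) (3 * t) with
    | true => force (m + 1) fun m' => force (l.lcm (m + 1)) fun l' => force (3 * t) fun t' =>
        lchk k m' l' t'
    | false => false

def psum (m : ℕ) : ℕ := ∑ p ∈ Finset.range m with p.Prime, p

theorem psum_succ (m : ℕ) : psum (m + 1) = psum m + if m.Prime then m else 0 := by
  unfold psum
  rw [Finset.sum_filter, Finset.sum_range_succ, ← Finset.sum_filter]

theorem pchk_spec (r : ℕ) (k : ℕ) : ∀ m : ℕ, 2 ≤ m → r < m → m + k ≤ (r + 1) ^ 2 →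
    pchk (Nat.factorial r) k m (Nat.count Nat.Prime m) (psum m) = true →
    ∀ q, m ≤ q → q < m + k → q.Prime →
      (Nat.count Nat.Prime q) * (Nat.count Nat.Prime q) * q
        < (3 * Nat.count Nat.Prime q + 2) * psum q := by
  induction k with
  | zero => intro m _ _ _ _ q h1 h2; omega
  | succ k ih =>
    intro m hm2 hm hk h q hq1 hq2 hq
    have hp : Nat.beq (Nat.gcd m (Nat.factorial r)) 1 = true ↔ m.Prime := by
      have e0 : Nat.beq (Nat.gcd m (Nat.factorial r)) 1 = true ↔ Nat.Coprime m (Nat.factorial r) :=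
        ⟨Nat.eq_of_beq_eq_true, fun h => by rw [Nat.Coprime] at h; rw [h]; rfl⟩
      rw [e0]
      rw [Nat.coprime_factorial_iff (by omega)]
      constructor
      · intro h1
        by_contra h2
        have := Nat.minFac_sq_le_self (by omega) h2
        nlinarith
      · intro h1
        rw [h1.minFac_eq]; exact hm
    have hc := Nat.count_succ Nat.Prime m
    have hs := psum_succ m
    rw [pchk] at h
    by_cases hpm : m.Prime
    · rw [hp.2 hpm] at h
      simp only [force_eq] at h
      rw [if_pos hpm] at hc hs
      split at h
      · rename_i h3
        rw [← hc, ← hs] at h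
        rcases Nat.eq_or_lt_of_le hq1 with h4 | h4
        · subst h4
          simpa [Nat.blt_eq] using h3
        · exact ih (m + 1) (by omega) (by omega) (by omega) h q (by omega) (by omega) hq
      · simp at h
    · have hf : Nat.beq (Nat.gcd m (Nat.factorial r)) 1 = false := by
        rw [← Bool.not_eq_true, hp]; exact hpm
      rw [hf] at h
      simp only [force_eq] at h
      rw [if_neg hpm] at hc hs
      rcases Nat.eq_or_lt_of_le hq1 with h4 | h4
      · subst h4; exact absurd hq hpm
      · simp only [add_zero] at hc hs
        rw [← hc, ← hs] at h
        exact ih (m + 1) (by omega) (by omega) (by omega) h q (by omega) (by omega) hq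

theorem lcmUpto_succ (n : ℕ) : Nat.lcmUpto (n + 1) = (Nat.lcmUpto n).lcm (n + 1) := by
  unfold Nat.lcmUpto
  rw [← Finset.insert_Icc_right_eq_Icc_add_one (by omega), Finset.lcm_insert, lcm_comm]
  rfl

theorem lchk_spec (k : ℕ) : ∀ m : ℕ, lchk k m (Nat.lcmUpto m) (3 ^ m) = true →
    ∀ q, m < q → q ≤ m + k → Nat.lcmUpto q ≤ 3 ^ q := by
  induction k with
  | zero => intro m _ q h1 h2; omega
  | succ k ih =>
    intro m h q hq1 hq2
    rw [lchk] at h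
    split at h
    · rename_i h3
      simp only [force_eq] at h
      have h5 : 3 * 3 ^ m = 3 ^ (m + 1) := by ring
      rw [← lcmUpto_succ, h5] at h h3
      rcases Nat.eq_or_lt_of_le (Nat.succ_le_of_lt hq1) with h4 | h4
      · subst h4
        exact Nat.le_of_ble_eq_true h3
      · exact ih (m + 1) h q h4 (by omega)
    · simp at h

set_option maxRecDepth 100000 in
theorem lcm_small (q : ℕ) (hq : q ≤ 5000) : Nat.lcmUpto q ≤ 3 ^ q := by
  rcases Nat.eq_zero_or_pos q with rfl | h
  · decide
  · refine lchk_spec 5000 0 ?_ q h (by omega)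
    decide +kernel

set_option maxRecDepth 100000 in
theorem prime_small (q : ℕ) (h11 : 11 ≤ q) (hq : q ≤ 40400) (hp : q.Prime) :
    (Nat.count Nat.Prime q) * (Nat.count Nat.Prime q) * q
        < (3 * Nat.count Nat.Prime q + 2) * psum q := by
  rcases lt_or_ge q 121 with h | h
  · have c : Nat.count Nat.Prime 11 = 4 := by decide +kernel
    have s : psum 11 = 17 := by decide +kernel
    refine pchk_spec 10 110 11 (by norm_num) (by norm_num) (by norm_num) ?_ q h11 (by omega) hp
    rw [c, s]; decide +kernel
  rcases lt_or_ge q 201 with h' | h'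
  · have c : Nat.count Nat.Prime 121 = 30 := by decide +kernel
    have s : psum 121 = 1593 := by decide +kernel
    refine pchk_spec 20 80 121 (by norm_num) (by norm_num) (by norm_num) ?_ q h (by omega) hp
    rw [c, s]; decide +kernel
  · have c : Nat.count Nat.Prime 201 = 46 := by decide +kernel
    have s : psum 201 = 4227 := by decide +kernel
    refine pchk_spec 200 40200 201 (by norm_num) (by norm_num) (by norm_num) ?_ q h' (by omega) hp
    have key : force (Nat.factorial 200) (fun Q => pchk Q 40200 201 46 4227) = true := by
      decide +kernel
    rw [force_eq] at key
    rw [c, s]; exact key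

theorem sum_nth (n : ℕ) : ∑ i ∈ Finset.range n, Nat.nth Nat.Prime i = psum (Nat.nth Nat.Prime n) := by
  induction n with
  | zero => rw [Nat.nth_prime_zero_eq_two]; decide
  | succ k ih =>
    rw [Finset.sum_range_succ, ih]
    unfold psum
    rw [Nat.filter_range_nth_eq_insert_of_infinite Nat.infinite_setOfPred_prime,
      Finset.sum_insert (by simp), add_comm]

theorem final_of (H : ∀ q : ℕ, 11 ≤ q → q.Prime →
      (Nat.count Nat.Prime q) * (Nat.count Nat.Prime q) * q
        < (3 * Nat.count Nat.Prime q + 2) * psum q) (n : ℕ) (hn : 4 ≤ n) :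
    avgGap n / avgPrime n < 2 / (n : ℝ) := by
  set q := Nat.nth Nat.Prime n with hqd
  have hqp : q.Prime := Nat.prime_nth_prime n
  have h11 : 11 ≤ q := by
    have : Nat.nth Nat.Prime 4 = 11 := by
      have : Nat.count Nat.Prime 11 = 4 := by decide +kernel
      rw [← this, Nat.nth_count (by norm_num)]
    rw [← this]
    exact Nat.nth_monotone Nat.infinite_setOfPred_prime hn
  have hc : Nat.count Nat.Prime q = n := Nat.count_nth_of_infinite Nat.infinite_setOfPred_prime n
  have h := H q h11 hqp
  rw [hc, hqd, ← sum_nth, ← hqd] at h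
  have hS : ∀ k : ℕ, ∑ i ∈ Finset.Icc 1 k, (nthPrime i : ℝ)
      = ((∑ i ∈ Finset.range k, Nat.nth Nat.Prime i : ℕ) : ℝ) := by
    intro k
    induction k with
    | zero => simp
    | succ k ih =>
      rw [Finset.sum_Icc_succ_top (by omega), ih, Finset.sum_range_succ]
      simp [nthPrime]
  unfold avgGap avgPrime
  rw [hS, hS, Finset.sum_range_succ, ← hqd]
  set S := ∑ i ∈ Finset.range n, Nat.nth Nat.Prime i
  have hR : (n : ℝ) * n * q < (3 * n + 2) * S := by exact_mod_cast h
  have hn0 : (0 : ℝ) < n := by positivity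
  have hq0 : (0 : ℝ) < q := by exact_mod_cast hqp.pos
  have hS0 : (0 : ℝ) < S := by
    have : (0 : ℝ) < n * n * q := by positivity
    by_contra hh
    push Not at hh
    nlinarith
  rw [div_lt_div_iff₀ (by positivity) hn0]
  push_cast
  have : (1 / ((n : ℝ) + 1) * (S + q) - 1 / n * S) * n = (n * q - S) / (n + 1) := by
    field_simp; ring
  rw [this, div_lt_iff₀ (by positivity)]
  have e : 2 * (1 / (n : ℝ) * S) * (n + 1) = (2 * S * (n + 1)) / n := by ring
  rw [e, lt_div_iff₀ hn0]
  nlinarith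

open ArithmeticFunction in
noncomputable def Psi (n : ℕ) : ℝ := ∑ d ∈ Finset.Ioc 0 n, vonMangoldt d

theorem psi_nat (n : ℕ) : Chebyshev.psi (n : ℝ) = Psi n := by
  simp [Chebyshev.psi, Psi]

theorem log_fact_eq (N : ℕ) : Real.log (N.factorial : ℝ)
    = ∑ d ∈ Finset.Ioc 0 N, ArithmeticFunction.vonMangoldt d * ((N / d : ℕ) : ℝ) := by
  rw [← ArithmeticFunction.sum_Ioc_mul_zeta_eq_sum, ArithmeticFunction.vonMangoldt_mul_zeta]
  induction N with
  | zero => simp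
  | succ k ih =>
    rw [Finset.sum_Ioc_succ_top (by omega), ← ih, Nat.factorial_succ]
    push_cast
    rw [Real.log_mul (by positivity) (by positivity), ArithmeticFunction.log_apply]
    push_cast
    ring

theorem log_fact_div (N k : ℕ) : Real.log ((N / k).factorial : ℝ)
    = ∑ d ∈ Finset.Ioc 0 N, ArithmeticFunction.vonMangoldt d * ((N / d / k : ℕ) : ℝ) := by
  rw [log_fact_eq]
  have hsub : Finset.Ioc 0 (N / k) ⊆ Finset.Ioc 0 N :=
    Finset.Ioc_subset_Ioc_right (Nat.div_le_self _ _)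
  rw [← Finset.sum_subset hsub]
  · refine Finset.sum_congr rfl fun d _ => ?_
    rw [Nat.div_div_eq_div_mul, Nat.div_div_eq_div_mul, mul_comm k d]
  · intro d hd hd2
    simp only [Finset.mem_Ioc, not_and, not_le] at hd hd2
    have : N / d / k = 0 := by
      rw [Nat.div_div_eq_div_mul, mul_comm, ← Nat.div_div_eq_div_mul]
      exact Nat.div_eq_of_lt (hd2 hd.1)
    simp [this]

noncomputable def DD (N : ℕ) : ℝ := Real.log (N.factorial : ℝ) - Real.log ((N / 2).factorial : ℝ)
  - Real.log ((N / 3).factorial : ℝ) - Real.log ((N / 5).factorial : ℝ)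
  + Real.log ((N / 30).factorial : ℝ)

theorem DD_eq (N : ℕ) : DD N = ∑ d ∈ Finset.Ioc 0 N, ArithmeticFunction.vonMangoldt d *
    (((N / d : ℕ) : ℝ) - ((N / d / 2 : ℕ) : ℝ) - ((N / d / 3 : ℕ) : ℝ) - ((N / d / 5 : ℕ) : ℝ)
      + ((N / d / 30 : ℕ) : ℝ)) := by
  unfold DD
  rw [log_fact_div, log_fact_div, log_fact_div, log_fact_div, log_fact_eq]
  simp only [mul_sub, mul_add, Finset.sum_sub_distrib, Finset.sum_add_distrib]

theorem DD_le (N : ℕ) : DD N ≤ Psi N := by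
  rw [DD_eq, Psi]
  refine Finset.sum_le_sum fun d _ => ?_
  have h : N / d + N / d / 30 ≤ 1 + N / d / 2 + N / d / 3 + N / d / 5 := by omega
  have h' : ((N / d : ℕ) : ℝ) + ((N / d / 30 : ℕ) : ℝ)
      ≤ 1 + ((N / d / 2 : ℕ) : ℝ) + ((N / d / 3 : ℕ) : ℝ) + ((N / d / 5 : ℕ) : ℝ) := by
    exact_mod_cast h
  have := ArithmeticFunction.vonMangoldt_nonneg (n := d)
  nlinarith

theorem le_DD (N : ℕ) : Psi N ≤ Psi (N / 6) + DD N := by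
  have hsub : Finset.Ioc 0 (N / 6) ⊆ Finset.Ioc 0 N :=
    Finset.Ioc_subset_Ioc_right (Nat.div_le_self _ _)
  have e : Psi (N / 6) = ∑ d ∈ Finset.Ioc 0 N,
      if d ≤ N / 6 then ArithmeticFunction.vonMangoldt d else 0 := by
    rw [Psi, ← Finset.sum_filter]
    refine Finset.sum_congr ?_ fun _ _ => rfl
    ext d
    simp only [Finset.mem_Ioc, Finset.mem_filter]
    have := Nat.div_le_self N 6
    omega
  rw [DD_eq, e, Psi, ← Finset.sum_add_distrib]
  refine Finset.sum_le_sum fun d hd => ?_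
  rw [Finset.mem_Ioc] at hd
  have hv := ArithmeticFunction.vonMangoldt_nonneg (n := d)
  split_ifs with h6
  · have h : N / d / 2 + N / d / 3 + N / d / 5 ≤ N / d + N / d / 30 := by omega
    have h' : ((N / d / 2 : ℕ) : ℝ) + ((N / d / 3 : ℕ) : ℝ) + ((N / d / 5 : ℕ) : ℝ)
        ≤ ((N / d : ℕ) : ℝ) + ((N / d / 30 : ℕ) : ℝ) := by
      exact_mod_cast h
    nlinarith
  · have h1 : 1 ≤ N / d := (Nat.one_le_div_iff hd.1).2 hd.2
    have h2 : N / d < 6 := by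
      rw [Nat.div_lt_iff_lt_mul hd.1]
      omega
    have h : 1 + N / d / 2 + N / d / 3 + N / d / 5 ≤ N / d + N / d / 30 := by omega
    have h' : 1 + ((N / d / 2 : ℕ) : ℝ) + ((N / d / 3 : ℕ) : ℝ) + ((N / d / 5 : ℕ) : ℝ)
        ≤ ((N / d : ℕ) : ℝ) + ((N / d / 30 : ℕ) : ℝ) := by
      exact_mod_cast h
    nlinarith

theorem log_fact_le (m : ℕ) (hm : 1 ≤ m) :
    Real.log (m.factorial : ℝ) ≤ m * Real.log m - m + 1 + Real.log m := by
  induction m, hm using Nat.le_induction with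
  | base => simp
  | succ k hk ih =>
    have hk0 : (0 : ℝ) < k := by exact_mod_cast hk
    rw [Nat.factorial_succ]
    push_cast
    rw [Real.log_mul (by positivity) (by positivity)]
    have h1 : Real.log (k / (k + 1)) ≤ k / (k + 1) - 1 := Real.log_le_sub_one_of_pos (by positivity)
    rw [Real.log_div (by positivity) (by positivity)] at h1
    have h2 : (k : ℝ) / (k + 1) - 1 = - (1 / (k + 1)) := by field_simp; ring
    rw [h2] at h1
    have h3 : (k + 1 : ℝ) * (Real.log k - Real.log (k + 1)) ≤ (k + 1) * -(1 / (k + 1)) := by gcongr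
    have h4 : (k + 1 : ℝ) * -(1 / (k + 1)) = -1 := by field_simp
    nlinarith

theorem le_log_fact (m : ℕ) (hm : 1 ≤ m) :
    m * Real.log m - m + 1 ≤ Real.log (m.factorial : ℝ) := by
  induction m, hm using Nat.le_induction with
  | base => simp
  | succ k hk ih =>
    have hk0 : (0 : ℝ) < k := by exact_mod_cast hk
    rw [Nat.factorial_succ]
    push_cast
    rw [Real.log_mul (by positivity) (by positivity)]
    have h1 : Real.log ((k + 1) / k) ≤ (k + 1) / k - 1 := Real.log_le_sub_one_of_pos (by positivity)
    rw [Real.log_div (by positivity) (by positivity)] at h1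
    have h2 : ((k : ℝ) + 1) / k - 1 = 1 / k := by field_simp; ring
    rw [h2] at h1
    have h3 : (k : ℝ) * (Real.log (k + 1) - Real.log k) ≤ k * (1 / k) := by gcongr
    have h4 : (k : ℝ) * (1 / k) = 1 := by field_simp
    nlinarith

theorem log_fact_bounds (N k : ℕ) (hk : 1 ≤ k) (hN : k ≤ N) :
    (N / k : ℝ) * (Real.log N - Real.log k) - N / k + 1 - (Real.log N - Real.log k)
      ≤ Real.log ((N / k).factorial : ℝ) ∧
    Real.log ((N / k).factorial : ℝ) ≤
      (N / k : ℝ) * (Real.log N - Real.log k) - N / k + 1 + (Real.log N - Real.log k) := by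
  have hk0 : (0 : ℝ) < k := by exact_mod_cast hk
  have hN0 : (0 : ℝ) < N := by exact_mod_cast (by omega : 0 < N)
  rw [← Real.log_div (by positivity) (by positivity)]
  have hm : 1 ≤ N / k := (Nat.one_le_div_iff hk).2 hN
  have hm0 : (1 : ℝ) ≤ ((N / k : ℕ) : ℝ) := by exact_mod_cast hm
  have hle : ((N / k : ℕ) : ℝ) ≤ N / k := Nat.cast_div_le
  have hlt : (N / k : ℝ) < ((N / k : ℕ) : ℝ) + 1 := by
    rw [div_lt_iff₀ hk0]
    have := Nat.lt_mul_div_succ N hk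
    have h2 : (N : ℝ) < k * ((N / k : ℕ) + 1) := by exact_mod_cast this
    linarith
  have h1 := log_fact_le _ hm
  have h2 := le_log_fact _ hm
  set m : ℝ := ((N / k : ℕ) : ℝ)
  set x : ℝ := (N / k : ℝ)
  have hx0 : 0 < x := by linarith
  have hlog : Real.log m ≤ Real.log x := Real.log_le_log (by linarith) hle
  have hm00 : 0 ≤ Real.log m := Real.log_nonneg hm0
  have t1 : Real.log (x / m) ≤ x / m - 1 := Real.log_le_sub_one_of_pos (by positivity)
  rw [Real.log_div (by positivity) (by positivity)] at t1
  have t2 : m * (Real.log x - Real.log m) ≤ m * (x / m - 1) := by gcongr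
  have t3 : m * (x / m - 1) = x - m := by field_simp
  have s1 : Real.log (m / x) ≤ m / x - 1 := Real.log_le_sub_one_of_pos (by positivity)
  rw [Real.log_div (by positivity) (by positivity)] at s1
  have s2 : x * (Real.log m - Real.log x) ≤ x * (m / x - 1) := by gcongr
  have s3 : x * (m / x - 1) = m - x := by field_simp
  constructor
  · nlinarith
  · nlinarith

theorem DD_bounds (N : ℕ) (hN : 30 ≤ N) :
    0.92129 * N - 5 * Real.log N + 5.8 ≤ DD N ∧ DD N ≤ 0.921293 * N + 5 * Real.log N - 7.8 := by
  have h1 := log_fact_bounds N 1 (by norm_num) (by omega)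
  have h2 := log_fact_bounds N 2 (by norm_num) (by omega)
  have h3 := log_fact_bounds N 3 (by norm_num) (by omega)
  have h5 := log_fact_bounds N 5 (by norm_num) (by omega)
  have h30 := log_fact_bounds N 30 (by norm_num) (by omega)
  have e30 : Real.log ((30 : ℕ) : ℝ) = Real.log 2 + Real.log 3 + Real.log 5 := by
    rw [← Real.log_mul (by norm_num) (by norm_num), ← Real.log_mul (by norm_num) (by norm_num)]
    norm_num
  rw [e30] at h30
  simp only [Nat.div_one, Nat.cast_one, Real.log_one, Nat.cast_ofNat] at h1 h2 h3 h5 h30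
  have hN0 : (30 : ℝ) ≤ N := by exact_mod_cast hN
  have a2 := Real.log_two_gt_d9
  have b2 := Real.log_two_lt_d9
  have a3 := Real.log_three_gt_d9
  have b3 := Real.log_three_lt_d9
  have a5 := Real.log_five_gt_d9
  have b5 := Real.log_five_lt_d9
  unfold DD
  have A1 : (0.92129 : ℝ) * N ≤ (14 / 30 * Real.log 2 + 9 / 30 * Real.log 3 + 5 / 30 * Real.log 5) * N := by
    gcongr; linarith
  have A2 : (14 / 30 * Real.log 2 + 9 / 30 * Real.log 3 + 5 / 30 * Real.log 5) * N ≤ (0.921293 : ℝ) * N := by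
    gcongr; linarith
  constructor
  · nlinarith
  · nlinarith

theorem Psi_le (N : ℕ) : Psi N ≤ 1.115 * N := by
  induction N using Nat.strong_induction_on with
  | _ N ih =>
    rcases le_or_gt N 5000 with h | h
    · have h1 := lcm_small N h
      rw [← psi_nat, Chebyshev.psi_eq_log_lcmUpto]
      have h2 : Real.log (Nat.lcmUpto N : ℝ) ≤ Real.log ((3 : ℝ) ^ N) := by
        apply Real.log_le_log
        · exact_mod_cast Nat.lcmUpto_pos N
        · exact_mod_cast h1
      rw [Real.log_pow] at h2
      have := Real.log_three_lt_d9
      have hN0 : (0 : ℝ) ≤ N := by positivity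
      nlinarith
    · have h1 := ih (N / 6) (by omega)
      have h2 := le_DD N
      have h3 := (DD_bounds N (by omega)).2
      have h4 : ((N / 6 : ℕ) : ℝ) ≤ N / 6 := Nat.cast_div_le
      have hN0 : (5000 : ℝ) < N := by exact_mod_cast h
      have h5 : Real.log (N / 5000) ≤ N / 5000 - 1 := Real.log_le_sub_one_of_pos (by positivity)
      rw [Real.log_div (by positivity) (by norm_num)] at h5
      have e : Real.log 5000 = 3 * Real.log 2 + 4 * Real.log 5 := by
        have : (5000 : ℝ) = 2 ^ 3 * 5 ^ 4 := by norm_num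
        rw [this, Real.log_mul (by norm_num) (by norm_num), Real.log_pow, Real.log_pow]
        norm_num
      have b2 := Real.log_two_lt_d9
      have b5 := Real.log_five_lt_d9
      linarith

theorem psi_le' (x : ℝ) (hx : 0 ≤ x) : Chebyshev.psi x ≤ 1.115 * x := by
  rw [Chebyshev.psi_eq_psi_coe_floor, psi_nat]
  have := Psi_le ⌊x⌋₊
  have h := Nat.floor_le hx
  linarith

theorem theta_ge'' (N : ℕ) (hN : 40000 ≤ N) : 0.912 * N ≤ Chebyshev.theta N := by
  have hN0 : (40000 : ℝ) ≤ N := by exact_mod_cast hN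
  have h1 := Chebyshev.psi_sub_theta_le_psi_add_psi_add_psi (N : ℝ)
  rw [psi_nat] at h1
  have h2 := DD_le N
  have h3 := (DD_bounds N (by omega)).1
  have h5 : Real.log (N / 40000) ≤ N / 40000 - 1 := Real.log_le_sub_one_of_pos (by positivity)
  rw [Real.log_div (by positivity) (by norm_num)] at h5
  have e : Real.log 40000 = 6 * Real.log 2 + 4 * Real.log 5 := by
    have : (40000 : ℝ) = 2 ^ 6 * 5 ^ 4 := by norm_num
    rw [this, Real.log_mul (by norm_num) (by norm_num), Real.log_pow, Real.log_pow]
    norm_num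
  have b2 := Real.log_two_lt_d9
  have b5 := Real.log_five_lt_d9
  have p2 := psi_le' ((N : ℝ) ^ (2 : ℝ)⁻¹) (by positivity)
  have p3 := psi_le' ((N : ℝ) ^ (3 : ℝ)⁻¹) (by positivity)
  have p5 := psi_le' ((N : ℝ) ^ (5 : ℝ)⁻¹) (by positivity)
  have q5 : (N : ℝ) ^ (5 : ℝ)⁻¹ ≤ (N : ℝ) ^ (3 : ℝ)⁻¹ :=
    Real.rpow_le_rpow_of_exponent_le (by linarith) (by norm_num)
  have q2 : (N : ℝ) ^ (2 : ℝ)⁻¹ ≤ N / 200 := by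
    have : ((N : ℝ) ^ (2 : ℝ)⁻¹) ^ 2 = N := by
      rw [← Real.rpow_natCast, ← Real.rpow_mul (by positivity)]; norm_num
    refine le_of_sq_le_sq ?_ (by positivity)
    rw [this]; nlinarith
  have q3 : (N : ℝ) ^ (3 : ℝ)⁻¹ ≤ N / 1000 := by
    have : ((N : ℝ) ^ (3 : ℝ)⁻¹) ^ 3 = N := by
      rw [← Real.rpow_natCast, ← Real.rpow_mul (by positivity)]; norm_num
    refine le_of_pow_le_pow_left₀ (n := 3) (by norm_num) (by positivity) ?_
    rw [this, div_pow, le_div_iff₀ (by norm_num)]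
    have : (40000 : ℝ) ^ 2 ≤ (N : ℝ) ^ 2 := by gcongr
    nlinarith
  linarith

noncomputable def hh (c x : ℝ) : ℝ := (x - c) / Real.log x

noncomputable def GG (c t : ℝ) : ℝ := t ^ 2 / (2 * Real.log t) + t ^ 2 / (4 * Real.log t ^ 2)
  - c * (t / Real.log t + t / Real.log t ^ 2 + 6 * t / Real.log t ^ 3)

theorem hh_mono (c x y : ℝ) (hc : 0 ≤ c) (hx : 0 < x) (hl : 1 ≤ Real.log x) (hxy : x ≤ y) :
    hh c x ≤ hh c y := by
  have hlog : Real.log x ≤ Real.log y := Real.log_le_log hx hxy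
  unfold hh
  rw [div_le_div_iff₀ (by linarith) (by linarith)]
  have t1 : Real.log (y / x) ≤ y / x - 1 := Real.log_le_sub_one_of_pos (div_pos (by linarith) hx)
  rw [Real.log_div (by linarith) (by linarith)] at t1
  have t2 : x * (Real.log y - Real.log x) ≤ x * (y / x - 1) := by gcongr
  have t3 : x * (y / x - 1) = y - x := by field_simp
  nlinarith [mul_nonneg hc (sub_nonneg.2 hlog), mul_nonneg (sub_nonneg.2 hxy) (sub_nonneg.2 hl)]

theorem hh_mono_nat (c : ℝ) (hc : 2 ≤ c) (k : ℕ) (hk : 2 ≤ k) : hh c k ≤ hh c ((k + 1 : ℕ) : ℝ) := by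
  rcases Nat.eq_or_lt_of_le hk with h | h
  · subst h
    have a2 := Real.log_two_gt_d9
    have h23 : Real.log 2 ≤ Real.log 3 := Real.log_le_log (by norm_num) (by norm_num)
    unfold hh
    norm_num
    rw [div_le_div_iff₀ (by linarith) (by linarith)]
    nlinarith
  · have h3 : (3 : ℝ) ≤ k := by exact_mod_cast h
    refine hh_mono c _ _ (by linarith) (by linarith) ?_ (by push_cast; linarith)
    have := Real.log_le_log (by norm_num) h3
    have := Real.log_three_gt_d9
    linarith

theorem GG_deriv (c t : ℝ) (ht : 1 < t) : HasDerivAt (GG c)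
    (t / Real.log t - t / (2 * Real.log t ^ 3)
      - c * (1 / Real.log t + 4 / Real.log t ^ 3 - 18 / Real.log t ^ 4)) t := by
  have hl : Real.log t ≠ 0 := (Real.log_pos ht).ne'
  have ht0 : t ≠ 0 := by linarith
  have dl := Real.hasDerivAt_log ht0
  have d1 : HasDerivAt (fun t : ℝ => t) 1 t := hasDerivAt_id t
  have d2 := d1.pow 2
  have A := d2.div (dl.const_mul 2) (by simpa using hl)
  have B := d2.div ((dl.pow 2).const_mul 4) (by simpa using hl)
  have C := d1.div dl hl
  have D := d1.div (dl.pow 2) (pow_ne_zero 2 hl)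
  have E := (d1.const_mul 6).div (dl.pow 3) (pow_ne_zero 3 hl)
  have F := (A.add B).sub (((C.add D).add E).const_mul c)
  refine HasDerivAt.congr_deriv (f := GG c) (F.congr_of_eventuallyEq (Filter.Eventually.of_forall fun s => ?_)) ?_
  · simp [GG]
  · simp
    field_simp
    ring

theorem log96 : (4.5 : ℝ) ≤ Real.log 96 := by
  have e : Real.log 96 = 5 * Real.log 2 + Real.log 3 := by
    have : (96 : ℝ) = 2 ^ 5 * 3 := by norm_num
    rw [this, Real.log_mul (by norm_num) (by norm_num), Real.log_pow]
    norm_num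
  have := Real.log_two_gt_d9
  have := Real.log_three_gt_d9
  linarith

theorem GG_step (c : ℝ) (hc : 0 ≤ c) (k : ℕ) (hk : 96 ≤ k) :
    GG c ((k + 1 : ℕ) : ℝ) - GG c k ≤ hh c ((k + 1 : ℕ) : ℝ) := by
  have hk0 : (96 : ℝ) ≤ k := by exact_mod_cast hk
  obtain ⟨t, ht, he⟩ := exists_hasDerivAt_eq_slope (GG c) _ (a := (k : ℝ)) (b := ((k + 1 : ℕ) : ℝ))
    (by push_cast; linarith)
    (fun x hx => (GG_deriv c x (by linarith [hx.1])).continuousAt.continuousWithinAt)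
    (fun x hx => GG_deriv c x (by linarith [hx.1]))
  have e1 : (((k + 1 : ℕ) : ℝ) - k) = 1 := by push_cast; ring
  rw [e1, div_one] at he
  rw [← he]
  have ht96 : (96 : ℝ) ≤ t := by linarith [ht.1]
  have hl : 4.5 ≤ Real.log t := log96.trans (Real.log_le_log (by norm_num) ht96)
  refine le_trans ?_ (hh_mono c t _ hc (by linarith) (by linarith) ht.2.le)
  unfold hh
  have hl0 : 0 < Real.log t := by linarith
  have s1 : 0 ≤ t / (2 * Real.log t ^ 3) := by positivity
  have s2 : 0 ≤ 4 / Real.log t ^ 3 - 18 / Real.log t ^ 4 := by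
    have : 4 / Real.log t ^ 3 - 18 / Real.log t ^ 4 = (4 * Real.log t - 18) / Real.log t ^ 4 := by
      field_simp
    rw [this]
    apply div_nonneg _ (by positivity)
    linarith
  have s3 := mul_nonneg hc s2
  have s4 : (t - c) / Real.log t = t / Real.log t - c * (1 / Real.log t) := by ring
  rw [s4]
  nlinarith

theorem hh_ge (c l : ℝ) (hc : 0 ≤ c) (n : ℕ) (hl0 : 0 < l) (hl : l ≤ Real.log n) : -(c / l) ≤ hh c n := by
  unfold hh
  have h1 : -(c / Real.log n) ≤ (n - c) / Real.log n := by
    rw [← neg_div]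
    apply div_le_div_of_nonneg_right _ (by linarith)
    have : (0 : ℝ) ≤ n := by positivity
    linarith
  have h2 : c / Real.log n ≤ c / l := by gcongr
  linarith

theorem sum_hh_ge (c : ℝ) (hc : 0 ≤ c) (N : ℕ) (hN : 96 ≤ N) :
    GG c N - 1200 - 47.5 * c ≤ ∑ n ∈ Finset.Ioc 2 N, hh c n := by
  induction N, hN using Nat.le_induction with
  | base =>
    have a2 := Real.log_two_gt_d9
    have a3 := Real.log_three_gt_d9
    rw [← Finset.sum_Ioc_consecutive _ (show 2 ≤ 7 by norm_num) (show 7 ≤ 96 by norm_num)]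
    have s1 : ∑ n ∈ Finset.Ioc (2 : ℕ) 7, -(c / 1.098) ≤ ∑ n ∈ Finset.Ioc (2 : ℕ) 7, hh c (n : ℝ) := by
      refine Finset.sum_le_sum fun n hn => hh_ge c _ hc n (by norm_num) ?_
      rw [Finset.mem_Ioc] at hn
      have : (3 : ℝ) ≤ n := by exact_mod_cast hn.1
      have := Real.log_le_log (by norm_num) this
      linarith
    have s2 : ∑ n ∈ Finset.Ioc (7 : ℕ) 96, -(c / 2.079) ≤ ∑ n ∈ Finset.Ioc (7 : ℕ) 96, hh c (n : ℝ) := by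
      refine Finset.sum_le_sum fun n hn => hh_ge c _ hc n (by norm_num) ?_
      rw [Finset.mem_Ioc] at hn
      have : (2 : ℝ) ^ 3 ≤ n := by
        have : (8 : ℝ) ≤ n := by exact_mod_cast hn.1
        linarith
      have := Real.log_le_log (by norm_num) this
      rw [Real.log_pow] at this
      push_cast at this
      linarith
    rw [Finset.sum_const, Nat.card_Ioc, nsmul_eq_mul] at s1 s2
    norm_num at s1 s2
    have d1 : c / (549 / 500) = 500 / 549 * c := by ring
    have d2 : c / (2079 / 1000) = 1000 / 2079 * c := by ring
    rw [d1] at s1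
    rw [d2] at s2
    have g : GG c ((96 : ℕ) : ℝ) ≤ 1200 := by
      unfold GG
      push_cast
      have hl := log96
      have hl0 : 0 < Real.log 96 := by linarith
      have g1 : (96 : ℝ) ^ 2 / (2 * Real.log 96) ≤ 96 ^ 2 / (2 * 4.5) := by gcongr
      have g2 : (96 : ℝ) ^ 2 / (4 * Real.log 96 ^ 2) ≤ 96 ^ 2 / (4 * 4.5 ^ 2) := by gcongr
      have g3 : 0 ≤ c * (96 / Real.log 96 + 96 / Real.log 96 ^ 2 + 6 * 96 / Real.log 96 ^ 3) := by
        positivity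
      norm_num at g1 g2
      norm_num at g3 ⊢
      linarith
    refine le_trans ?_ (add_le_add s1 s2)
    have g' : GG c ((96 : ℕ) : ℝ) - 1200 ≤ 0 := sub_nonpos.2 g
    refine le_trans (sub_le_sub_right g' _) ?_
    linarith
  | succ k hk ih =>
    rw [Finset.sum_Ioc_succ_top (by omega)]
    have := GG_step c hc k hk
    linarith

noncomputable def WW (c : ℝ) (M : ℕ) : ℝ := ∑ p ∈ Finset.Ioc 0 M with p.Prime, ((p : ℝ) - c)

theorem WW_succ (c : ℝ) (M : ℕ) :
    WW c (M + 1) = WW c M + if (M + 1).Prime then ((M + 1 : ℕ) : ℝ) - c else 0 := by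
  unfold WW
  rw [Finset.sum_filter, Finset.sum_filter, Finset.sum_Ioc_succ_top (by omega)]

theorem theta_succ (M : ℕ) : Chebyshev.theta ((M + 1 : ℕ) : ℝ)
    = Chebyshev.theta (M : ℝ) + if (M + 1).Prime then Real.log ((M + 1 : ℕ) : ℝ) else 0 := by
  unfold Chebyshev.theta
  rw [Nat.floor_natCast, Nat.floor_natCast, Finset.sum_filter, Finset.sum_filter,
    Finset.sum_Ioc_succ_top (by omega)]

theorem abel (c : ℝ) (hc : 2 ≤ c) (M : ℕ) (hM : 2 ≤ M) :
    (Chebyshev.theta M - 1.115 * M) * hh c M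
      + 1.115 * (2 * hh c 2 + ∑ n ∈ Finset.Ioc 2 M, hh c n) ≤ WW c M := by
  induction M, hM using Nat.le_induction with
  | base =>
    have e : Finset.filter Nat.Prime (Finset.Ioc 0 2) = {2} := by decide
    have e2 : Chebyshev.theta ((2 : ℕ) : ℝ) = Real.log 2 := by
      unfold Chebyshev.theta
      rw [Nat.floor_natCast, e]; simp
    rw [e2, WW, e]
    have : Real.log 2 * hh c 2 = 2 - c := by
      unfold hh
      have := Real.log_pos (show (1 : ℝ) < 2 by norm_num)
      field_simp
    simp
    linarith
  | succ k hk ih =>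
    rw [Finset.sum_Ioc_succ_top (by omega), WW_succ, theta_succ]
    have h1 := hh_mono_nat c hc k hk
    have h2 : Chebyshev.theta (k : ℝ) ≤ 1.115 * k :=
      (Chebyshev.theta_le_psi _).trans (psi_le' _ (by positivity))
    have h3 : (if (k + 1).Prime then Real.log ((k + 1 : ℕ) : ℝ) else 0) * hh c ((k + 1 : ℕ) : ℝ)
        = if (k + 1).Prime then ((k + 1 : ℕ) : ℝ) - c else 0 := by
      split_ifs
      · unfold hh
        have : 0 < Real.log ((k + 1 : ℕ) : ℝ) := Real.log_pos (by
          have : (2 : ℝ) ≤ k := by exact_mod_cast hk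
          push_cast; linarith)
        field_simp
      · simp
    rw [← h3]
    have h4 := mul_nonneg (sub_nonneg.2 h1) (sub_nonneg.2 h2)
    have h5 : ((k + 1 : ℕ) : ℝ) = k + 1 := by push_cast; ring
    generalize (if (k + 1).Prime then Real.log ((k + 1 : ℕ) : ℝ) else 0) = aa
    generalize hh c ((k + 1 : ℕ) : ℝ) = H at *
    rw [h5]
    nlinarith

theorem WW_nonneg (N : ℕ) (hN : 40000 ≤ N) : 0 ≤ WW ((N + 1) / 3) N := by
  have hN0 : (40000 : ℝ) ≤ N := by exact_mod_cast hN
  set c : ℝ := ((N : ℝ) + 1) / 3 with hc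
  have h1 := abel c (by rw [hc]; linarith) N (by omega)
  have h2 := sum_hh_ge c (by positivity) N (by omega)
  have h3 := theta_ge'' N hN
  have h4 : -(c / 0.693) ≤ hh c ((2 : ℕ) : ℝ) := by
    refine hh_ge c _ (by positivity) 2 (by norm_num) ?_
    have a2 := Real.log_two_gt_d9
    push_cast
    linarith
  push_cast at h4
  refine le_trans ?_ h1
  have e : Real.log 40000 = 6 * Real.log 2 + 4 * Real.log 5 := by
    have : (40000 : ℝ) = 2 ^ 6 * 5 ^ 4 := by norm_num
    rw [this, Real.log_mul (by norm_num) (by norm_num), Real.log_pow, Real.log_pow]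
    norm_num
  have a2 := Real.log_two_gt_d9
  have a5 := Real.log_five_gt_d9
  have b2 := Real.log_two_lt_d9
  have b5 := Real.log_five_lt_d9
  have h5 : Real.log (N / 40000) ≤ N / 40000 - 1 := Real.log_le_sub_one_of_pos (by positivity)
  rw [Real.log_div (by positivity) (by norm_num)] at h5
  have hL : 10.596 ≤ Real.log N := by
    have := Real.log_le_log (by norm_num) hN0
    linarith
  have hLN : Real.log N ≤ 0.000265 * N := by linarith
  unfold GG at h2
  have hhN : hh c N = (N - c) / Real.log N := rfl
  rw [hhN]
  set L := Real.log N
  have hL0 : 0 < L := by linarith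
  set u := 1 / L with hu
  have hu0 : 0 < u := by positivity
  have hu1 : u ≤ 0.0944 := by
    rw [hu, div_le_iff₀ hL0]; linarith
  have hLu : L * u = 1 := by rw [hu]; field_simp
  have g : (N : ℝ) ^ 2 / (2 * L) + (N : ℝ) ^ 2 / (4 * L ^ 2)
      - c * (N / L + N / L ^ 2 + 6 * N / L ^ 3)
      = N * u * (N * (1 / 2 + u / 4) - c * (1 + u + 6 * u ^ 2)) := by
    rw [hu]; field_simp
  rw [g] at h2
  have k1 : -(0.203 * (2 / 3)) * (N * u * N) ≤ (Chebyshev.theta N - 1.115 * N) * ((N - c) / L) := by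
    have e1 : (N - c) / L = (N - c) * u := by rw [hu]; ring
    rw [e1]
    have p1 : 0 ≤ (N - c) * u := by
      apply mul_nonneg _ hu0.le
      rw [hc]; linarith
    have p2 : (N - c) * u ≤ (2 / 3 * N) * u := by
      apply mul_le_mul_of_nonneg_right _ hu0.le
      rw [hc]; linarith
    have p3 : -(0.203 * N) * ((N - c) * u) ≤ (Chebyshev.theta N - 1.115 * N) * ((N - c) * u) := by
      apply mul_le_mul_of_nonneg_right _ p1
      linarith
    have p4 : (0.203 * N) * ((N - c) * u) ≤ (0.203 * N) * ((2 / 3 * N) * u) :=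
      mul_le_mul_of_nonneg_left p2 (by positivity)
    linarith
  have k2 : 1200 + 47.5 * c + 2 * (c / 0.693) ≤ 0.0045 * (N * u * N) := by
    have q1 : 1200 + 47.5 * c + 2 * (c / 0.693) ≤ 16.85 * N := by
      have q0 : c / 0.693 ≤ 1.4431 * c := by
        rw [div_le_iff₀ (by norm_num)]
        have : 0 ≤ c := by positivity
        linarith
      linarith
    have q2 : (1 : ℝ) ≤ 0.000265 * (N * u) := by
      have := mul_le_mul_of_nonneg_right hLN hu0.le
      rw [hLu] at this
      linarith
    have q3 := mul_le_mul_of_nonneg_right q2 (show (0 : ℝ) ≤ N by positivity)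
    have q4 : (0 : ℝ) ≤ N * u * N := by positivity
    linarith
  have k3 : 0.126 * (N * u * N) ≤ N * u * (N * (1 / 2 + u / 4) - c * (1 + u + 6 * u ^ 2)) := by
    rw [show (0.126 : ℝ) * (N * u * N) = N * u * (N * 0.126) by ring]
    apply mul_le_mul_of_nonneg_left _ (by positivity)
    have r1 : c ≤ 0.333342 * N := by rw [hc]; linarith
    have r2 : 1 + u + 6 * u ^ 2 ≤ 1.147868 := by nlinarith
    have r3 : 1 + u + 6 * u ^ 2 ≤ 1 + 1.5664 * u := by nlinarith
    have r4 : c * (1 + u + 6 * u ^ 2) ≤ 0.333342 * N * (1 + 1.5664 * u) := by gcongr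
    have r5 : (N : ℝ) * u ≤ N * 0.0944 := by gcongr
    linarith
  have q4 : (0 : ℝ) ≤ N * u * N := by positivity
  linarith

theorem prime_large (q : ℕ) (hq : 40001 ≤ q) :
    (Nat.count Nat.Prime q) * (Nat.count Nat.Prime q) * q
        < (3 * Nat.count Nat.Prime q + 2) * psum q := by
  obtain ⟨N, rfl⟩ : ∃ N, q = N + 1 := ⟨q - 1, by omega⟩
  have h := WW_nonneg N (by omega)
  have hset : Finset.filter Nat.Prime (Finset.Ioc 0 N)
      = Finset.filter Nat.Prime (Finset.range (N + 1)) := by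
    ext p
    simp only [Finset.mem_filter, Finset.mem_Ioc, Finset.mem_range]
    constructor
    · rintro ⟨h1, h2⟩; exact ⟨by omega, h2⟩
    · rintro ⟨h1, h2⟩; exact ⟨⟨h2.pos, by omega⟩, h2⟩
  have e : WW (((N : ℝ) + 1) / 3) N
      = (psum (N + 1) : ℝ) - Nat.count Nat.Prime (N + 1) * (((N : ℝ) + 1) / 3) := by
    unfold WW psum
    rw [hset, Finset.sum_sub_distrib, Finset.sum_const, nsmul_eq_mul,
      Nat.count_eq_card_filter_range]
    push_cast
    rfl
  rw [e] at h
  have h2 : (Nat.count Nat.Prime (N + 1) * (N + 1) : ℝ) ≤ 3 * psum (N + 1) := by linarith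
  have h3 : Nat.count Nat.Prime (N + 1) * (N + 1) ≤ 3 * psum (N + 1) := by exact_mod_cast h2
  have h4 : 0 < psum (N + 1) := by
    unfold psum
    apply Finset.sum_pos
    · intro p hp
      exact (Finset.mem_filter.1 hp).2.pos
    · exact ⟨2, by simp [Nat.prime_two]; omega⟩
  have h5 := Nat.mul_le_mul_left (Nat.count Nat.Prime (N + 1)) h3
  calc _ = Nat.count Nat.Prime (N + 1) * (Nat.count Nat.Prime (N + 1) * (N + 1)) := by
        rw [mul_assoc]
    _ ≤ Nat.count Nat.Prime (N + 1) * (3 * psum (N + 1)) := h5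
    _ = 3 * Nat.count Nat.Prime (N + 1) * psum (N + 1) := by
        rw [← mul_assoc, mul_comm _ 3]
    _ < _ := Nat.mul_lt_mul_of_pos_right (Nat.lt_add_of_pos_right (by norm_num)) h4

theorem stmt7 (n : ℕ) (hn : 4 ≤ n) :
    avgGap n / avgPrime n < 2 / (n : ℝ) := by
  refine final_of (fun q h11 hq => ?_) n hn
  rcases le_or_gt q 40400 with h | h
  · exact prime_small q h11 h hq
  · exact prime_large q (by omega)
end

section
/- For every integer n ≥ 2, the averaged primes satisfy the strengthened Andrica-type bound √(p̄_{n+1}) − √(p̄_n) < √(ln n / n). -/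
open Finset Real

lemma log_fact_le_s9 (n : ℕ) (hn : 1 ≤ n) :
    Real.log (n.factorial) ≤ n * Real.log n - n + Real.log n + 1 := by
  induction n, hn using Nat.le_induction with
  | base => simp
  | succ n hn ih =>
    have h0 : (0:ℝ) < n := by exact_mod_cast hn
    have h1 : (0:ℝ) < n + 1 := by linarith
    rw [Nat.factorial_succ]
    push_cast
    rw [Real.log_mul (by positivity) (by positivity)]
    have h := Real.log_le_sub_one_of_pos (show (0:ℝ) < n / (n+1) by positivity)
    rw [Real.log_div h0.ne' h1.ne'] at h
    have h2 : (n+1) * (Real.log n - Real.log (n+1)) ≤ -1 := by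
      have := mul_le_mul_of_nonneg_left h h1.le
      have e : ((n:ℝ)+1) * (n/(n+1) - 1) = -1 := by field_simp; ring
      linarith
    nlinarith

lemma log_fact_ge (n : ℕ) (hn : 1 ≤ n) :
    n * Real.log n - n ≤ Real.log (n.factorial) := by
  induction n, hn using Nat.le_induction with
  | base => simp
  | succ n hn ih =>
    have h0 : (0:ℝ) < n := by exact_mod_cast hn
    have h1 : (0:ℝ) < n + 1 := by linarith
    rw [Nat.factorial_succ]
    push_cast
    rw [Real.log_mul (by positivity) (by positivity)]
    have h := Real.log_le_sub_one_of_pos (show (0:ℝ) < (n+1) / n by positivity)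
    rw [Real.log_div h1.ne' h0.ne'] at h
    have h2 : n * (Real.log (n+1) - Real.log n) ≤ 1 := by
      have := mul_le_mul_of_nonneg_left h h0.le
      have e : (n:ℝ) * ((n+1)/n - 1) = 1 := by field_simp; ring
      linarith
    nlinarith

open ArithmeticFunction in
lemma log_fact_eq_s9 (n M : ℕ) (h : n ≤ M) :
    Real.log (n.factorial) = ∑ d ∈ Icc 1 M, vonMangoldt d * ((n / d : ℕ) : ℝ) := by
  induction n with
  | zero => simp
  | succ n ih =>
    rw [Nat.factorial_succ]
    push_cast
    rw [Real.log_mul (by positivity) (by positivity), ih (by omega)]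
    have h1 : Real.log ((n:ℝ)+1) = ∑ d ∈ Icc 1 M, if d ∣ n+1 then vonMangoldt d else 0 := by
      rw [← Finset.sum_filter]
      have := vonMangoldt_sum (n := n+1)
      push_cast at this
      rw [← this]
      apply Finset.sum_congr _ (fun _ _ => rfl)
      ext d
      simp only [Nat.mem_divisors, mem_filter, mem_Icc]
      constructor
      · rintro ⟨h1, h2⟩
        exact ⟨⟨Nat.pos_of_dvd_of_pos h1 (by omega), (Nat.le_of_dvd (by omega) h1).trans h⟩, h1⟩
      · rintro ⟨_, h1⟩
        exact ⟨h1, by omega⟩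
    rw [h1, ← Finset.sum_add_distrib]
    apply Finset.sum_congr rfl
    intro d hd
    rw [Nat.succ_div]
    split_ifs <;> push_cast <;> ring

lemma floor_comb (y : ℕ) : y + y / 30 ≤ 1 + y / 2 + y / 3 + y / 5 := by omega

open ArithmeticFunction in
lemma psi_comb (m : ℕ) :
    Real.log ((30*m).factorial) + Real.log (m.factorial) - Real.log ((15*m).factorial)
      - Real.log ((10*m).factorial) - Real.log ((6*m).factorial) ≤ Chebyshev.psi ((30*m : ℕ) : ℝ) := by
  rw [log_fact_eq_s9 (30*m) (30*m) le_rfl, log_fact_eq_s9 m (30*m) (by omega),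
    log_fact_eq_s9 (15*m) (30*m) (by omega), log_fact_eq_s9 (10*m) (30*m) (by omega),
    log_fact_eq_s9 (6*m) (30*m) (by omega), Chebyshev.psi, Nat.floor_natCast,
    ← Finset.sum_add_distrib, ← Finset.sum_sub_distrib, ← Finset.sum_sub_distrib,
    ← Finset.sum_sub_distrib, ← Finset.Icc_add_one_left_eq_Ioc]
  apply Finset.sum_le_sum
  intro d hd
  have hΛ : 0 ≤ vonMangoldt d := vonMangoldt_nonneg
  have e1 : m / d = (30*m/d)/30 := by
    rw [Nat.div_div_eq_div_mul, mul_comm d, ← Nat.div_div_eq_div_mul]; congr 1; omega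
  have e2 : 15*m / d = (30*m/d)/2 := by
    rw [Nat.div_div_eq_div_mul, mul_comm d, ← Nat.div_div_eq_div_mul]; congr 1; omega
  have e3 : 10*m / d = (30*m/d)/3 := by
    rw [Nat.div_div_eq_div_mul, mul_comm d, ← Nat.div_div_eq_div_mul]; congr 1; omega
  have e5 : 6*m / d = (30*m/d)/5 := by
    rw [Nat.div_div_eq_div_mul, mul_comm d, ← Nat.div_div_eq_div_mul]; congr 1; omega
  have := floor_comb (30*m/d)
  rw [← e1, ← e2, ← e3, ← e5] at this
  have h : ((30*m/d : ℕ) : ℝ) + ((m/d : ℕ):ℝ) ≤ 1 + ((15*m/d : ℕ):ℝ) + ((10*m/d : ℕ):ℝ) + ((6*m/d : ℕ):ℝ) := by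
    exact_mod_cast this
  nlinarith

lemma log3_ge : 1.097 ≤ Real.log 3 := by
  have h : Real.log ((2:ℝ)^19) ≤ Real.log ((3:ℝ)^12) := Real.log_le_log (by norm_num) (by norm_num)
  rw [Real.log_pow, Real.log_pow] at h
  have := Real.log_two_gt_d9
  push_cast at h
  linarith

lemma log5_ge : 1.609 ≤ Real.log 5 := by
  have h : Real.log ((2:ℝ)^65) ≤ Real.log ((5:ℝ)^28) := Real.log_le_log (by norm_num) (by norm_num)
  rw [Real.log_pow, Real.log_pow] at h
  have := Real.log_two_gt_d9
  push_cast at h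
  linarith

lemma psi_lower (m : ℕ) (hm : 1 ≤ m) :
    27.6 * m - 3 * Real.log (30 * m) ≤ Chebyshev.psi ((30*m : ℕ) : ℝ) := by
  have h0 : (0:ℝ) < m := by exact_mod_cast hm
  have h := psi_comb m
  have a1 := log_fact_ge (30*m) (by omega)
  have a2 := log_fact_ge m hm
  have a3 := log_fact_le_s9 (15*m) (by omega)
  have a4 := log_fact_le_s9 (10*m) (by omega)
  have a5 := log_fact_le_s9 (6*m) (by omega)
  push_cast at a1 a2 a3 a4 a5
  have l30 : Real.log (30 * m) = Real.log 2 + Real.log 3 + Real.log 5 + Real.log m := by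
    rw [← Real.log_mul (by norm_num) (by norm_num), ← Real.log_mul (by norm_num) (by norm_num),
      ← Real.log_mul (by norm_num) (by positivity)]; norm_num
  have l15 : Real.log (15 * m) = Real.log 3 + Real.log 5 + Real.log m := by
    rw [← Real.log_mul (by norm_num) (by norm_num),
      ← Real.log_mul (by norm_num) (by positivity)]; norm_num
  have l10 : Real.log (10 * m) = Real.log 2 + Real.log 5 + Real.log m := by
    rw [← Real.log_mul (by norm_num) (by norm_num),
      ← Real.log_mul (by norm_num) (by positivity)]; norm_num
  have l6 : Real.log (6 * m) = Real.log 2 + Real.log 3 + Real.log m := by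
    rw [← Real.log_mul (by norm_num) (by norm_num),
      ← Real.log_mul (by norm_num) (by positivity)]; norm_num
  rw [l30] at a1 ⊢
  rw [l15] at a3
  rw [l10] at a4
  rw [l6] at a5
  have k2 := Real.log_two_gt_d9
  have k3 := log3_ge
  have k5 := log5_ge
  nlinarith [mul_le_mul_of_nonneg_left k2.le h0.le, mul_le_mul_of_nonneg_left k3 h0.le,
    mul_le_mul_of_nonneg_left k5 h0.le]

/-- upper bound for primes, implicit form -/
lemma prime_upper (n : ℕ) (hp : 30 ≤ Nat.nth Nat.Prime n) :
    0.92 * (Nat.nth Nat.Prime n : ℝ) - 27 ≤ (n + 4) * Real.log (Nat.nth Nat.Prime n) := by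
  set p := Nat.nth Nat.Prime n with hpd
  have hpp : p.Prime := Nat.prime_nth_prime n
  have hpi : Nat.primeCounting p = n + 1 := by
    rw [Nat.primeCounting_eq_primeCounting'_succ, Nat.primeCounting', Nat.count_succ, if_pos hpp]
    congr 1
    exact Nat.primeCounting'_nth_eq n
  have h1 := Chebyshev.psi_le_primeCounting_mul_log p
  rw [hpi] at h1
  have h2 := psi_lower (p/30) (by omega)
  have h3 : Chebyshev.psi ((30*(p/30) : ℕ) : ℝ) ≤ Chebyshev.psi (p:ℝ) :=
    Chebyshev.psi_mono (by exact_mod_cast (by omega))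
  have h4 : (30:ℝ) * ((p/30 : ℕ):ℝ) ≤ p := by exact_mod_cast (by omega : 30*(p/30) ≤ p)
  have h5 : (p:ℝ) ≤ 30 * ((p/30 : ℕ):ℝ) + 29 := by exact_mod_cast (by omega : p ≤ 30*(p/30) + 29)
  have h6 : Real.log (30 * ((p/30 : ℕ):ℝ)) ≤ Real.log p := by
    apply Real.log_le_log _ h4
    have : 0 < p/30 := by omega
    positivity
  push_cast at h1
  linarith

/-- lower bound -/
lemma lin_lower (i : ℕ) (hi : 39 ≤ i) : Real.exp 1 * (i+1) ≤ Nat.nth Nat.Prime i := by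
  set p := Nat.nth Nat.Prime i with hpd
  have hpc : Nat.primeCounting' p = i := Nat.primeCounting'_nth_eq i
  have hp : i + 2 ≤ p := Nat.add_two_le_nth_prime i
  have h := Nat.primeCounting'_add_le (a := 30) (k := 31) (by norm_num) (by norm_num) (p - 31)
  rw [show 31 + (p-31) = p by omega, hpc] at h
  have e1 : Nat.primeCounting' 31 = 10 := by decide +kernel
  have e2 : Nat.totient 30 = 8 := by decide +kernel
  rw [e1, e2] at h
  have h2 : 15 * i ≤ 4 * p + 146 := by omega
  have h3 : (15:ℝ) * i ≤ 4 * p + 146 := by exact_mod_cast h2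
  have := Real.exp_one_lt_d9
  have hi' : (39:ℝ) ≤ i := by exact_mod_cast hi
  nlinarith

lemma theta_seq (k : ℕ) :
    ∑ i ∈ range (k+1), Real.log (Nat.nth Nat.Prime i) ≤ Real.log 4 * Nat.nth Nat.Prime k := by
  refine le_trans ?_ (Chebyshev.theta_le_log4_mul_x (x := (Nat.nth Nat.Prime k : ℝ)) (by positivity))
  rw [Chebyshev.theta, Nat.floor_natCast]
  rw [← Finset.sum_image (s := range (k+1)) (g := Nat.nth Nat.Prime) (f := fun p : ℕ => Real.log (p:ℝ))
    (fun a _ b _ h => Nat.nth_injective Nat.infinite_setOfPred_prime h)]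
  apply Finset.sum_le_sum_of_subset_of_nonneg
  · intro p hp
    simp only [mem_image, mem_range] at hp
    obtain ⟨i, hi, rfl⟩ := hp
    simp only [mem_filter, mem_Ioc]
    refine ⟨⟨(Nat.prime_nth_prime i).pos, ?_⟩, Nat.prime_nth_prime i⟩
    exact Nat.nth_monotone Nat.infinite_setOfPred_prime (by omega)
  · intro p _ _
    exact Real.log_natCast_nonneg p

lemma xlog_step (k : ℝ) (hk : 0 ≤ k) :
    (k+1) * Real.log (k+1) - k * Real.log k ≤ Real.log (k+1) + 1 := by
  rcases hk.eq_or_lt with rfl | hk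
  · simp
  have h := Real.log_le_sub_one_of_pos (show (0:ℝ) < (k+1) / k by positivity)
  rw [Real.log_div (by positivity) hk.ne'] at h
  have h2 : k * (Real.log (k+1) - Real.log k) ≤ 1 := by
    have := mul_le_mul_of_nonneg_left h hk.le
    have e : k * ((k+1)/k - 1) = 1 := by field_simp; ring
    linarith
  nlinarith

lemma G_lower (k : ℕ) : k * Real.log k - (min k 39 : ℕ) ≤
    ∑ i ∈ range k, Real.log (Nat.nth Nat.Prime i) := by
  induction k with
  | zero => simp
  | succ k ih =>
    rw [Finset.sum_range_succ]
    have hs := xlog_step k (by positivity)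
    have hp : k + 2 ≤ Nat.nth Nat.Prime k := Nat.add_two_le_nth_prime k
    rcases lt_or_ge k 39 with h | h
    · rw [min_eq_left (by omega)] at ih ⊢
      have : Real.log ((k:ℝ)+1) ≤ Real.log (Nat.nth Nat.Prime k) :=
        Real.log_le_log (by positivity) (by exact_mod_cast (by omega))
      push_cast
      linarith
    · rw [min_eq_right (by omega)] at ih ⊢
      have : Real.log (Real.exp 1 * ((k:ℝ)+1)) ≤ Real.log (Nat.nth Nat.Prime k) :=
        Real.log_le_log (by positivity) (lin_lower k h)
      rw [Real.log_mul (by positivity) (by positivity), Real.log_exp] at this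
      push_cast at *
      linarith

lemma q_lower (k : ℕ) : ((k:ℝ)+1) * Real.log (k+1) - 39 ≤ Real.log 4 * Nat.nth Nat.Prime k := by
  have h1 := theta_seq k
  have h2 := G_lower (k+1)
  have h3 : ((min (k+1) 39 : ℕ):ℝ) ≤ 39 := by exact_mod_cast min_le_right _ _
  push_cast at h2 h3
  linarith

lemma S_lower (n : ℕ) : (n:ℝ)^2/2 * Real.log n - (n:ℝ)^2/4 - 39 * n ≤
    Real.log 4 * ∑ i ∈ range n, (Nat.nth Nat.Prime i : ℝ) := by
  induction n with
  | zero => simp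
  | succ n ih =>
    rw [Finset.sum_range_succ, mul_add]
    have h := q_lower n
    push_cast
    rcases Nat.eq_zero_or_pos n with rfl | hn
    · simp at *; linarith
    have h0 : (0:ℝ) < n := by exact_mod_cast hn
    have hl := Real.log_le_sub_one_of_pos (show (0:ℝ) < (n+1) / n by positivity)
    rw [Real.log_div (by positivity) h0.ne'] at hl
    have h2 : (n:ℝ)^2 * (Real.log (n+1) - Real.log n) ≤ n := by
      have := mul_le_mul_of_nonneg_left hl (sq_nonneg (n:ℝ))
      have e : (n:ℝ)^2 * ((n+1)/n - 1) = n := by field_simp; ring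
      linarith
    have h3 : 0 ≤ Real.log ((n:ℝ)+1) := Real.log_nonneg (by linarith)
    nlinarith
lemma key (n : ℕ) (hn : 2 ≤ n) (S P : ℝ) (hS : 0 < S)
    (h : n * P - S < 2 * (n+1) * √(S * Real.log n)) :
    √((1 / ((n+1 : ℕ):ℝ)) * (S + P)) - √((1 / (n:ℝ)) * S) < √(Real.log n / n) := by
  have h0 : (2:ℝ) ≤ n := by exact_mod_cast hn
  have hL : 0 < Real.log n := Real.log_pos (by linarith)
  rw [sub_lt_iff_lt_add]
  apply (Real.sqrt_lt' (by positivity)).2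
  rw [add_sq, Real.sq_sqrt (by positivity), Real.sq_sqrt (by positivity), mul_assoc,
    ← Real.sqrt_mul (by positivity)]
  have e : Real.log n / n * (1 / n * S) = (S * Real.log n) / (n:ℝ)^2 := by field_simp
  rw [e, Real.sqrt_div (by positivity), Real.sqrt_sq (by positivity)]
  set T := √(S * Real.log n)
  have h1 : 1 / ((n+1 : ℕ):ℝ) * (S + P) - 1 / n * S < 2 * (T / n) := by
    push_cast
    have : 1 / ((n:ℝ)+1) * (S + P) - 1 / n * S = (n * P - S) / (n * (n+1)) := by
      field_simp; ring
    rw [this, div_lt_iff₀ (by positivity)]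
    have : 2 * (T / n) * (n * (n + 1)) = 2 * (n+1) * T := by field_simp
    linarith
  have : 0 < Real.log n / n := by positivity
  linarith

lemma large_num (n : ℝ) (S P L : ℝ) (hn : 0 < n) (hL : 0 < L) (hS : 0.33 * n^2 * L ≤ S) (hP : P ≤ 1.475 * n * L) :
    n * P - S < 2 * (n+1) * √(S * L) := by
  have h1 : 0.5725 * n * L < √(S*L) := by
    apply Real.lt_sqrt_of_sq_lt
    have := mul_le_mul_of_nonneg_right hS hL.le
    have : 0 < n^2*L^2 := by positivity
    nlinarith
  have h2 : n * P ≤ n * (1.475 * n * L) := mul_le_mul_of_nonneg_left hP hn.le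
  have h3 : 2 * n * (0.5725 * n * L) ≤ 2 * n * √(S*L) := mul_le_mul_of_nonneg_left h1.le (by linarith)
  have : 0 < 0.5725 * n * L := by positivity
  nlinarith

lemma log1250 : 7.1 ≤ Real.log 1250 := by
  have h : Real.log ((2:ℝ)^72) ≤ Real.log ((1250:ℝ)^7) := Real.log_le_log (by norm_num) (by norm_num)
  rw [Real.log_pow, Real.log_pow] at h
  have := Real.log_two_gt_d9
  push_cast at h
  linarith

lemma P_upper (n p : ℝ) (hn : 1250 ≤ n) (hp0 : 0 < p)
    (h : 0.92 * p - 27 ≤ (n + 4) * Real.log p) : p ≤ 1.475 * n * Real.log n := by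
  by_contra! hc
  have hL : 7.1 ≤ Real.log n := log1250.trans (Real.log_le_log (by norm_num) hn)
  set L := Real.log n with hLd
  have hnp : 0 < n := by linarith
  have hLp : 0 < L := by linarith
  set p0 := 1.475 * n * L with hp0d
  have hp0p : 0 < p0 := by positivity
  have t1 : Real.log p ≤ Real.log p0 + (p/p0 - 1) := by
    have := Real.log_le_sub_one_of_pos (show 0 < p/p0 by positivity)
    rw [Real.log_div hp0.ne' hp0p.ne'] at this
    linarith
  have t2 : Real.log p0 = Real.log 1.475 + L + Real.log L := by
    rw [hp0d, Real.log_mul (by positivity) (by positivity), Real.log_mul (by positivity) (by positivity)]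
  have t3 : Real.log L ≤ 1.0795 + 0.125 * L := by
    have := Real.log_le_sub_one_of_pos (show 0 < L/8 by positivity)
    rw [Real.log_div (by positivity) (by norm_num), show (8:ℝ) = 2^3 by norm_num, Real.log_pow] at this
    have := Real.log_two_lt_d9
    push_cast at *
    linarith
  have t4 : Real.log 1.475 ≤ 0.397 := by
    have h : Real.log ((1.475:ℝ)^7) ≤ Real.log ((2:ℝ)^4) := Real.log_le_log (by norm_num) (by norm_num)
    rw [Real.log_pow, Real.log_pow] at h
    have := Real.log_two_lt_d9
    push_cast at h
    linarith
  have t5 : Real.log p ≤ 1.4765 + 1.125 * L + (p/p0 - 1) := by linarith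
  have t6 := mul_le_mul_of_nonneg_left t5 (show 0 ≤ n + 4 by linarith)
  -- (n+4)/p0 ≤ 0.92
  set r := p/p0 - 1 with hr
  have hrp : 0 < r := by rw [hr, sub_pos, lt_div_iff₀ hp0p]; linarith
  have hpr : p = p0 * (1 + r) := by rw [hr]; field_simp; ring
  have u1 : n + 4 ≤ 0.92 * p0 := by rw [hp0d]; nlinarith
  have u2 : (n + 4) * r ≤ 0.92 * p0 * r := mul_le_mul_of_nonneg_right u1 hrp.le
  have u3 : 0.92 * p0 - 27 ≤ (n+4) * (1.4765 + 1.125 * L) := by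
    have hq : 0.92 * p = 0.92 * p0 + 0.92 * p0 * r := by linear_combination 0.92 * hpr
    linarith
  rw [hp0d] at u3
  have u4 : 1250 * (0.232 * L - 1.4765) ≤ n * (0.232 * L - 1.4765) :=
    mul_le_mul_of_nonneg_right hn (by linarith)
  nlinarith

lemma S_num (n S : ℝ) (hn : 1250 ≤ n)
    (h : n^2/2 * Real.log n - n^2/4 - 39 * n ≤ Real.log 4 * S) : 0.33 * n^2 * Real.log n ≤ S := by
  have hL : 7.1 ≤ Real.log n := log1250.trans (Real.log_le_log (by norm_num) hn)
  set L := Real.log n with hLd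
  have h4 : Real.log 4 = 2 * Real.log 2 := by
    rw [show (4:ℝ) = 2^2 by norm_num, Real.log_pow]; norm_num
  have hl := Real.log_two_lt_d9
  have hl' := Real.log_two_gt_d9
  by_contra! hc
  have h1 : Real.log 4 * S ≤ 1.3863 * (0.33 * n^2 * L) := by
    have : 0 ≤ 0.33 * n^2 * L := by positivity
    calc Real.log 4 * S ≤ Real.log 4 * (0.33 * n^2 * L) := mul_le_mul_of_nonneg_left hc.le (by linarith)
      _ ≤ _ := mul_le_mul_of_nonneg_right (by linarith) this
  have h2 : 39 * n ≤ 0.0312 * n^2 := by nlinarith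
  have h3 : n^2 * 7.1 ≤ n^2 * L := mul_le_mul_of_nonneg_left hL (sq_nonneg n)
  have h5 : 0 < n^2 := by positivity
  nlinarith

def chkA (l n S k : ℕ) : Bool :=
  Nat.ble n 1 || (Nat.ble (2^l) n && Nat.ble ((n*k-S)^2*100+1) (4*S*69*l*(n+1)^2))

def isPA (k : ℕ) : Bool :=
  bif Nat.ble k 100 then
    [2,3,5,7,11,13,17,19,23,29,31,37,41,43,47,53,59,61,67,71,73,79,83,89,97].any (Nat.beq k)
  else Nat.beq (Nat.gcd k 2305567963945518424753102147331756070) 1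

def loopA (l n' S' : ℕ) : ℕ → ℕ → ℕ → ℕ → Bool
  | 0, _, n, S => Nat.beq n n' && Nat.beq S S'
  | f+1, k, n, S =>
    bif isPA k then (chkA l n S k && loopA l n' S' f (k+1) (n+1) (S+k))
    else loopA l n' S' f (k+1) n S

lemma isPA_spec (k : ℕ) (hk : k < 10201) : isPA k = true ↔ k.Prime := by
  rcases le_or_gt k 100 with h | h
  · have H : ∀ k < 101, isPA k = true ↔ k.Prime := by decide +kernel
    exact H k (by omega)
  · have e : isPA k = Nat.beq (Nat.gcd k 2305567963945518424753102147331756070) 1 := by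
      have : Nat.ble k 100 = false := by
        rw [Bool.eq_false_iff, ne_eq, Nat.ble_eq]; omega
      simp [isPA, this]
    rw [e, Nat.beq_eq]
    have hF : ∀ p < 101, p.Prime → p ∣ 2305567963945518424753102147331756070 := by decide +kernel
    constructor
    · intro hg
      by_contra hnp
      have h1 : k ≠ 1 := by omega
      have hm := Nat.minFac_prime h1
      have hs := Nat.minFac_sq_le_self (by omega) hnp
      have hlt : k.minFac < 101 := by nlinarith
      have hd := Nat.dvd_gcd (Nat.minFac_dvd k) (hF _ hlt hm)
      rw [hg] at hd
      exact hm.one_lt.ne' (Nat.dvd_one.1 hd)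
    · intro hp
      rcases (Nat.coprime_or_dvd_of_prime hp 2305567963945518424753102147331756070) with h' | h'
      · exact h'
      · exfalso
        have e2 : 2305567963945518424753102147331756070 = 2*3*5*7*11*13*17*19*23*29*31*37*41*43*47*53*59*61*67*71*73*79*83*89*97 := by norm_num
        rw [e2] at h'
        simp only [hp.dvd_mul] at h'
        have L : ∀ m, 0 < m → m ≤ 100 → ¬ k ∣ m := fun m h1 h2 h3 => by
          have := Nat.le_of_dvd h1 h3
          omega
        revert h'
        simp [L]

noncomputable def SP (n : ℕ) : ℕ := ∑ i ∈ range n, Nat.nth Nat.Prime i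

lemma loopA_sound (l n' S' : ℕ) : ∀ f k n S, k + f ≤ 10201 → n = Nat.count Nat.Prime k →
    S = SP n → loopA l n' S' f k n S = true →
    n' = Nat.count Nat.Prime (k+f) ∧ S' = SP n' ∧
      ∀ N, n ≤ N → N < n' → chkA l N (SP N) (Nat.nth Nat.Prime N) = true := by
  intro f
  induction f with
  | zero =>
    intro k n S _ hn hS h
    simp only [loopA, Bool.and_eq_true, Nat.beq_eq] at h
    obtain ⟨rfl, rfl⟩ := h
    exact ⟨hn, hS, fun N h1 h2 => by omega⟩
  | succ f ih =>
    intro k n S hk hn hS h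
    have hsp := isPA_spec k (by omega)
    rw [loopA] at h
    by_cases hp : k.Prime
    · rw [hsp.2 hp, cond_true, Bool.and_eq_true] at h
      obtain ⟨hc, hl⟩ := h
      have hq : Nat.nth Nat.Prime n = k := by rw [hn]; exact Nat.nth_count hp
      obtain ⟨a, b, c⟩ := ih (k+1) (n+1) (S+k) (by omega)
        (by rw [Nat.count_succ, if_pos hp, hn])
        (by rw [SP, Finset.sum_range_succ, hq, hS, SP]) hl
      refine ⟨by rw [a]; congr 1; omega, b, fun N h1 h2 => ?_⟩
      rcases h1.eq_or_lt with rfl | h1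
      · rw [← hS, hq]; exact hc
      · exact c N h1 h2
    · have : isPA k = false := by rw [Bool.eq_false_iff]; exact fun h => hp (hsp.1 h)
      rw [this, cond_false] at h
      obtain ⟨a, b, c⟩ := ih (k+1) n S (by omega)
        (by rw [Nat.count_succ, if_neg hp, hn, add_zero]) hS h
      exact ⟨by rw [a]; congr 1; omega, b, c⟩

lemma chk_real (l n S k : ℕ) (hn : 2 ≤ n) (h : chkA l n S k = true) :
    (n:ℝ) * k - S < 2 * (n+1) * √(S * Real.log n) := by
  have h1 : Nat.ble n 1 = false := by rw [Bool.eq_false_iff, ne_eq, Nat.ble_eq]; omega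
  rw [chkA, h1, Bool.false_or, Bool.and_eq_true, Nat.ble_eq, Nat.ble_eq] at h
  obtain ⟨ha, hb⟩ := h
  have hL : 0.69 * (l:ℝ) ≤ Real.log n := by
    have : Real.log ((2:ℝ)^l) ≤ Real.log n := Real.log_le_log (by positivity) (by exact_mod_cast ha)
    rw [Real.log_pow] at this
    have := Real.log_two_gt_d9
    nlinarith [(Nat.cast_nonneg l : (0:ℝ) ≤ l)]
  have hLn : 0 ≤ Real.log n := Real.log_natCast_nonneg n
  have hb' : (((n*k-S : ℕ):ℝ))^2*100 + 1 ≤ 4*S*69*l*(n+1)^2 := by exact_mod_cast hb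
  have hsub : (n:ℝ)*k - S ≤ ((n*k-S : ℕ):ℝ) := by
    have : n*k ≤ (n*k-S) + S := by omega
    have : (n:ℝ)*k ≤ ((n*k-S : ℕ):ℝ) + S := by exact_mod_cast this
    linarith
  refine hsub.trans_lt ?_
  have hS : (0:ℝ) ≤ S := Nat.cast_nonneg S
  apply lt_of_pow_lt_pow_left₀ 2 (by positivity)
  rw [mul_pow, Real.sq_sqrt (by positivity)]
  have : (S:ℝ) * (n+1)^2 * (0.69 * l) ≤ S * (n+1)^2 * Real.log n :=
    mul_le_mul_of_nonneg_left hL (by positivity)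
  nlinarith

lemma small (N : ℕ) (h2 : 2 ≤ N) (hN : N < 1252) :
    (N:ℝ) * (Nat.nth Nat.Prime N) - SP N < 2 * (N+1) * √(SP N * Real.log N) := by
  have c0 : 0 = Nat.count Nat.Prime 2 := by decide +kernel
  have s0 : 0 = SP 0 := by simp [SP]
  obtain ⟨ca, sa, ga⟩ := loopA_sound 1 8 77 18 2 0 0 (by norm_num) c0 s0 (by decide +kernel)
  obtain ⟨c1, s1, g1⟩ := loopA_sound 3 20 639 52 20 8 77 (by norm_num) ca sa (by decide +kernel)
  obtain ⟨c2, s2, g2⟩ := loopA_sound 4 109 29296 528 72 20 639 (by norm_num) c1 s1 (by decide +kernel)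
  obtain ⟨c3, s3, g3⟩ := loopA_sound 4 196 106733 600 600 109 29296 (by norm_num) c2 s2 (by decide +kernel)
  obtain ⟨c4, s4, g4⟩ := loopA_sound 4 278 229407 600 1200 196 106733 (by norm_num) c3 s3 (by decide +kernel)
  obtain ⟨c5, s5, g5⟩ := loopA_sound 4 357 396360 600 1800 278 229407 (by norm_num) c4 s4 (by decide +kernel)
  obtain ⟨c6, s6, g6⟩ := loopA_sound 4 430 593823 600 2400 357 396360 (by norm_num) c5 s5 (by decide +kernel)
  obtain ⟨c7, s7, g7⟩ := loopA_sound 4 503 835450 600 3000 430 593823 (by norm_num) c6 s6 (by decide +kernel)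
  obtain ⟨c8, s8, g8⟩ := loopA_sound 4 574 1111475 600 3600 503 835450 (by norm_num) c7 s7 (by decide +kernel)
  obtain ⟨c9, s9, g9⟩ := loopA_sound 4 646 1435105 600 4200 574 1111475 (by norm_num) c8 s8 (by decide +kernel)
  obtain ⟨c10, s10, g10⟩ := loopA_sound 4 712 1771393 600 4800 646 1435105 (by norm_num) c9 s9 (by decide +kernel)
  obtain ⟨c11, s11, g11⟩ := loopA_sound 4 783 2174734 600 5400 712 1771393 (by norm_num) c10 s10 (by decide +kernel)
  obtain ⟨c12, s12, g12⟩ := loopA_sound 4 853 2615298 600 6000 783 2174734 (by norm_num) c11 s11 (by decide +kernel)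
  obtain ⟨c13, s13, g13⟩ := loopA_sound 4 919 3070274 600 6600 853 2615298 (by norm_num) c12 s12 (by decide +kernel)
  obtain ⟨c14, s14, g14⟩ := loopA_sound 4 987 3580644 600 7200 919 3070274 (by norm_num) c13 s13 (by decide +kernel)
  obtain ⟨c15, s15, g15⟩ := loopA_sound 4 1051 4099402 600 7800 987 3580644 (by norm_num) c14 s14 (by decide +kernel)
  obtain ⟨c16, s16, g16⟩ := loopA_sound 4 1117 4673790 600 8400 1051 4099402 (by norm_num) c15 s15 (by decide +kernel)
  obtain ⟨c17, s17, g17⟩ := loopA_sound 4 1184 5296125 600 9000 1117 4673790 (by norm_num) c16 s16 (by decide +kernel)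
  obtain ⟨c18, s18, g18⟩ := loopA_sound 4 1252 5968867 601 9600 1184 5296125 (by norm_num) c17 s17 (by decide +kernel)
  rcases lt_or_ge N 8 with h | h
  · exact chk_real _ _ _ _ h2 (ga N (by omega) h)
  rcases lt_or_ge N 20 with h | h
  · exact chk_real _ _ _ _ h2 (g1 N (by omega) h)
  rcases lt_or_ge N 109 with h | h
  · exact chk_real _ _ _ _ h2 (g2 N (by omega) h)
  rcases lt_or_ge N 196 with h | h
  · exact chk_real _ _ _ _ h2 (g3 N (by omega) h)
  rcases lt_or_ge N 278 with h | h
  · exact chk_real _ _ _ _ h2 (g4 N (by omega) h)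
  rcases lt_or_ge N 357 with h | h
  · exact chk_real _ _ _ _ h2 (g5 N (by omega) h)
  rcases lt_or_ge N 430 with h | h
  · exact chk_real _ _ _ _ h2 (g6 N (by omega) h)
  rcases lt_or_ge N 503 with h | h
  · exact chk_real _ _ _ _ h2 (g7 N (by omega) h)
  rcases lt_or_ge N 574 with h | h
  · exact chk_real _ _ _ _ h2 (g8 N (by omega) h)
  rcases lt_or_ge N 646 with h | h
  · exact chk_real _ _ _ _ h2 (g9 N (by omega) h)
  rcases lt_or_ge N 712 with h | h
  · exact chk_real _ _ _ _ h2 (g10 N (by omega) h)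
  rcases lt_or_ge N 783 with h | h
  · exact chk_real _ _ _ _ h2 (g11 N (by omega) h)
  rcases lt_or_ge N 853 with h | h
  · exact chk_real _ _ _ _ h2 (g12 N (by omega) h)
  rcases lt_or_ge N 919 with h | h
  · exact chk_real _ _ _ _ h2 (g13 N (by omega) h)
  rcases lt_or_ge N 987 with h | h
  · exact chk_real _ _ _ _ h2 (g14 N (by omega) h)
  rcases lt_or_ge N 1051 with h | h
  · exact chk_real _ _ _ _ h2 (g15 N (by omega) h)
  rcases lt_or_ge N 1117 with h | h
  · exact chk_real _ _ _ _ h2 (g16 N (by omega) h)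
  rcases lt_or_ge N 1184 with h | h
  · exact chk_real _ _ _ _ h2 (g17 N (by omega) h)
  exact chk_real _ _ _ _ h2 (g18 N (by omega) hN)

theorem stmt9 (n : ℕ) (hn : 2 ≤ n) :
    Real.sqrt (avgPrime (n + 1)) - Real.sqrt (avgPrime n) < Real.sqrt (Real.log n / n) := by
  have hsum : ∀ m : ℕ, ∑ i ∈ Finset.Icc 1 m, (nthPrime i : ℝ) = (SP m : ℝ) := by
    intro m
    rw [SP]
    push_cast
    induction m with
    | zero => simp
    | succ m ih =>
      rw [Finset.sum_Icc_succ_top (by omega), ih, Finset.sum_range_succ, nthPrime]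
      simp
  have hSs : (SP (n+1) : ℝ) = SP n + (Nat.nth Nat.Prime n : ℝ) := by
    rw [SP, SP, Finset.sum_range_succ]; push_cast; rfl
  have hSpos : (0:ℝ) < SP n := by
    have : 0 < SP n := by
      rw [SP]
      exact Finset.sum_pos (fun i _ => (Nat.prime_nth_prime i).pos) ⟨0, by simp; omega⟩
    exact_mod_cast this
  rw [avgPrime, avgPrime, hsum, hsum, hSs]
  apply key n hn _ _ hSpos
  rcases lt_or_ge n 1252 with h | h
  · exact small n hn h
  · have hn' : (1250:ℝ) ≤ n := by exact_mod_cast (by omega : 1250 ≤ n)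
    have hp := Nat.add_two_le_nth_prime n
    apply large_num _ _ _ _ (by linarith) (Real.log_pos (by linarith))
    · apply S_num _ _ hn'
      have := S_lower n
      rw [SP]
      push_cast
      exact this
    · exact P_upper _ _ hn' (by exact_mod_cast (Nat.prime_nth_prime n).pos) (prime_upper n (by omega))
end
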